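/- Fix h ∈ ℝ, set θ_n := 1 + h/√n, and let X ∈ {−1,1}ⁿ have the Curie–Weiss distribution P_{1,CW}. Then the log-likelihood ratio log( dP_{θ_n,CW}/dP_{1,CW} (X) ) = (h/(2√n))·n·X̄² − ( Z_n(θ_n,CW) − Z_n(1,CW) ) converges in distribution to (h/2)·U² − F(h) + F(0), where U is a random variable with law H_0. -/

import Mathlib

open MeasureTheory Filter

noncomputable def spin (b : Bool) : ℝ := if b then 1 else -1

noncomputable def mag (n : ℕ) (x : Fin n → Bool) : ℝ := (∑ i, spin (x i)) / n

/-- Unnormalized Curie–Weiss measure on `{-1,1}ⁿ` (encoded by `Fin n → Bool`). -/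
noncomputable def cwUnnorm (n : ℕ) (θ : ℝ) : Measure (Fin n → Bool) :=
  ∑ x : Fin n → Bool,
    ENNReal.ofReal (Real.exp ((n : ℝ) * θ * mag n x ^ 2 / 2)) • Measure.dirac x

/-- The Curie–Weiss model `P_{θ,CW}`. -/
noncomputable def cwMeasure (n : ℕ) (θ : ℝ) : Measure (Fin n → Bool) :=
  (cwUnnorm n θ Set.univ)⁻¹ • cwUnnorm n θ

/-- Log normalizing constant of the Curie–Weiss model. -/
noncomputable def Zcw (n : ℕ) (θ : ℝ) : ℝ :=
  Real.log (∑ x : Fin n → Bool, Real.exp ((n : ℝ) * θ * mag n x ^ 2 / 2))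

/-- `F(h) = log ∫ exp(-u⁴/12 + h u²/2) du`. -/
noncomputable def Fcrit (h : ℝ) : ℝ :=
  Real.log (∫ u : ℝ, Real.exp (-(u ^ 4) / 12 + h * u ^ 2 / 2))

/-- The probability distribution `H_h` with density `exp(-u⁴/12 + h u²/2 - F(h))`. -/
noncomputable def Hmeasure (h : ℝ) : Measure ℝ :=
  MeasureTheory.volume.withDensity fun u =>
    ENNReal.ofReal (Real.exp (-(u ^ 4) / 12 + h * u ^ 2 / 2 - Fcrit h))


lemma lc_hasDeriv (t : ℝ) : HasDerivAt (fun t => Real.log (Real.cosh t)) (Real.tanh t) t := by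
  rw [Real.tanh_eq_sinh_div_cosh]
  exact (Real.hasDerivAt_cosh t).log (Real.cosh_pos t).ne'

lemma tanh_hasDeriv (t : ℝ) : HasDerivAt Real.tanh (1 - Real.tanh t ^ 2) t := by
  have h := (Real.hasDerivAt_sinh t).div (Real.hasDerivAt_cosh t) (Real.cosh_pos t).ne'
  have h2 : (Real.sinh / Real.cosh) = Real.tanh := by
    funext s; simp [Real.tanh_eq_sinh_div_cosh]
  rw [h2] at h
  convert! h using 1
  rw [Real.tanh_eq_sinh_div_cosh]
  have := (Real.cosh_pos t).ne'
  field_simp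

lemma nonneg_of_deriv {f f' : ℝ → ℝ} (hf : ∀ t, HasDerivAt f (f' t) t) (h0 : f 0 = 0)
    (h' : ∀ t, 0 ≤ t → 0 ≤ f' t) (t : ℝ) (ht : 0 ≤ t) : 0 ≤ f t := by
  have hm : MonotoneOn f (Set.Ici 0) := by
    apply monotoneOn_of_deriv_nonneg (convex_Ici 0)
    · exact fun x _ => (hf x).continuousAt.continuousWithinAt
    · exact fun x _ => (hf x).differentiableAt.differentiableWithinAt
    · intro x hx
      rw [(hf x).deriv]
      rw [interior_Ici] at hx
      exact h' x (le_of_lt hx)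
  have := hm (Set.mem_Ici.2 le_rfl) (Set.mem_Ici.2 ht) ht
  rwa [h0] at this

lemma tanh_sq_lower (t : ℝ) (ht : 0 ≤ t) : t ^ 2 / (1 + t ^ 2) ≤ Real.tanh t ^ 2 := by
  rw [Real.tanh_eq_sinh_div_cosh, div_pow, Real.cosh_sq]
  have h1 : t ≤ Real.sinh t := Real.self_le_sinh_iff.2 ht
  have h2 : t ^ 2 ≤ Real.sinh t ^ 2 := by gcongr
  rw [div_le_div_iff₀ (by positivity) (by positivity)]
  nlinarith

lemma tanh_le (t : ℝ) (ht : 0 ≤ t) : Real.tanh t ≤ t := by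
  have := nonneg_of_deriv (f := fun t => t - Real.tanh t) (f' := fun t => 1 - (1 - Real.tanh t ^ 2))
    (fun t => (hasDerivAt_id t).sub (tanh_hasDeriv t)) (by simp) (fun t _ => by
      have := sq_nonneg (Real.tanh t); linarith) t ht
  simpa using this

lemma tanh_nn (t : ℝ) (ht : 0 ≤ t) : 0 ≤ Real.tanh t := by
  rw [Real.tanh_eq_sinh_div_cosh]
  exact div_nonneg (Real.sinh_nonneg_iff.2 ht) (Real.cosh_pos t).le

lemma lc_lower (t : ℝ) : t ^ 2 / 2 - t ^ 4 / 12 ≤ Real.log (Real.cosh t) := by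
  have key : ∀ t : ℝ, 0 ≤ t → t ^ 2 / 2 - t ^ 4 / 12 ≤ Real.log (Real.cosh t) := by
    intro t ht
    have h1 : ∀ t : ℝ, 0 ≤ t → 0 ≤ Real.tanh t - (t - t ^ 3 / 3) := by
      refine nonneg_of_deriv (f' := fun t => (1 - Real.tanh t ^ 2) - (1 - t ^ 2)) ?_ (by simp) ?_
      · intro t
        have := (tanh_hasDeriv t).sub ((hasDerivAt_id t).sub ((hasDerivAt_pow 3 t).div_const 3))
        convert! this using 1
        simp
      · intro t ht
        have h1 := tanh_le t ht
        have h2 := tanh_nn t ht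
        have : Real.tanh t ^ 2 ≤ t ^ 2 := by gcongr
        linarith
    have := nonneg_of_deriv (f := fun t => Real.log (Real.cosh t) - (t ^ 2 / 2 - t ^ 4 / 12))
      (f' := fun t => Real.tanh t - (t - t ^ 3 / 3)) (by
        intro t
        have := (lc_hasDeriv t).sub (((hasDerivAt_pow 2 t).div_const 2).sub
          ((hasDerivAt_pow 4 t).div_const 12))
        convert! this using 1
        norm_num
        ring) (by simp) h1 t ht
    linarith
  have := key |t| (abs_nonneg t)
  rw [Real.cosh_abs, sq_abs, show |t| ^ 4 = (|t| ^ 2) ^ 2 by ring, sq_abs] at this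
  calc _ = t ^ 2 / 2 - (t ^ 2) ^ 2 / 12 := by ring
    _ ≤ _ := this

lemma lc_upper (t : ℝ) : Real.log (Real.cosh t) ≤ t ^ 2 / 2 - t ^ 4 / (12 * (1 + t ^ 2)) := by
  have key : ∀ t : ℝ, 0 ≤ t →
      Real.log (Real.cosh t) ≤ t ^ 2 / 2 - (t ^ 2 - 1 + (1 + t ^ 2)⁻¹) / 12 := by
    intro t ht
    have hd : ∀ t : ℝ, HasDerivAt (fun t : ℝ => 1 + t ^ 2) (2 * t) t := by
      intro t
      convert! (hasDerivAt_pow 2 t).const_add 1 using 1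
      norm_num
    have hp : ∀ t : ℝ, 0 < 1 + t ^ 2 := fun t => by positivity
    have h1 : ∀ t : ℝ, 0 ≤ t →
        0 ≤ (t - (2 * t + -(2 * t) / (1 + t ^ 2) ^ 2) / 12) - Real.tanh t := by
      refine nonneg_of_deriv (f' := fun t => (1 - (2 + (-2 * (1 + t ^ 2) ^ 2 -
        (-(2 * t)) * (2 * (1 + t ^ 2) * (2 * t))) / ((1 + t ^ 2) ^ 2) ^ 2) / 12)
          - (1 - Real.tanh t ^ 2)) ?_ (by simp) ?_
      · intro t
        have e1 : HasDerivAt (fun t : ℝ => 2 * t) 2 t := by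
          simpa using (hasDerivAt_id t).const_mul 2
        have e2 : HasDerivAt (fun t : ℝ => -(2 * t)) (-2) t := e1.neg
        have e3 : HasDerivAt (fun t : ℝ => (1 + t ^ 2) ^ 2) (2 * (1 + t ^ 2) * (2 * t)) t := by
          convert! (hd t).pow 2 using 1
          norm_num
        have e4 := e2.div e3 (by have := hp t; positivity)
        exact ((hasDerivAt_id t).sub ((e1.add e4).div_const 12)).sub (tanh_hasDeriv t)
      · intro t ht
        have h1 := tanh_sq_lower t ht
        have h2 : (2 + (-2 * (1 + t ^ 2) ^ 2 -
          (-(2 * t)) * (2 * (1 + t ^ 2) * (2 * t))) / ((1 + t ^ 2) ^ 2) ^ 2) / 12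
            ≤ t ^ 2 / (1 + t ^ 2) := by
          have := hp t
          have e : t ^ 2 / (1 + t ^ 2) - (2 + (-2 * (1 + t ^ 2) ^ 2 -
            (-(2 * t)) * (2 * (1 + t ^ 2) * (2 * t))) / ((1 + t ^ 2) ^ 2) ^ 2) / 12
            = t ^ 4 * (10 * t ^ 2 + 18) / (12 * (1 + t ^ 2) ^ 3) := by
            field_simp
            ring
          have : 0 ≤ t ^ 4 * (10 * t ^ 2 + 18) / (12 * (1 + t ^ 2) ^ 3) := by positivity
          linarith
        linarith
    have := nonneg_of_deriv
      (f := fun t => (t ^ 2 / 2 - (t ^ 2 - 1 + (1 + t ^ 2)⁻¹) / 12) - Real.log (Real.cosh t))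
      (f' := fun t => (t - (2 * t + -(2 * t) / (1 + t ^ 2) ^ 2) / 12) - Real.tanh t) (by
        intro t
        have e0 : HasDerivAt (fun t : ℝ => t ^ 2) (2 * t) t := by simpa using hasDerivAt_pow 2 t
        have := ((e0.div_const 2).sub (((e0.sub_const 1).add
          ((hd t).inv (hp t).ne')).div_const 12)).sub (lc_hasDeriv t)
        convert! this using 1
        ring) (by simp) h1 t ht
    linarith
  have := key |t| (abs_nonneg t)
  rw [Real.cosh_abs, sq_abs] at this
  refine this.trans (le_of_eq ?_)
  have : 0 < 1 + t ^ 2 := by positivity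
  field_simp
  ring

noncomputable def kern (n : ℕ) (θ u : ℝ) : ℝ :=
  Real.exp (-(Real.sqrt n) * u ^ 2 / (2 * θ)) * Real.cosh (u / Real.sqrt (Real.sqrt n)) ^ n

lemma kern_bounds (n : ℕ) (hn : 0 < n) (h u : ℝ) (hr : 0 < Real.sqrt n + h) :
    Real.exp (h * Real.sqrt n / (2 * (Real.sqrt n + h)) * u ^ 2 - u ^ 4 / 12)
      ≤ kern n (1 + h / Real.sqrt n) u ∧
    kern n (1 + h / Real.sqrt n) u ≤
    Real.exp (h * Real.sqrt n / (2 * (Real.sqrt n + h)) * u ^ 2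
      - u ^ 4 / (12 * (1 + u ^ 2 / Real.sqrt n))) := by
  have hn' : (0 : ℝ) < n := by exact_mod_cast hn
  have hr0 : 0 < Real.sqrt n := Real.sqrt_pos.2 hn'
  have hq0 : 0 < Real.sqrt (Real.sqrt n) := Real.sqrt_pos.2 hr0
  have hq2 : Real.sqrt (Real.sqrt n) ^ 2 = Real.sqrt n := Real.sq_sqrt hr0.le
  have hr2 : Real.sqrt n ^ 2 = n := Real.sq_sqrt hn'.le
  have hk : kern n (1 + h / Real.sqrt n) u =
      Real.exp (-(Real.sqrt n) * u ^ 2 / (2 * (1 + h / Real.sqrt n)) +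
        n * Real.log (Real.cosh (u / Real.sqrt (Real.sqrt n)))) := by
    rw [kern, Real.exp_add, Real.exp_nat_mul, Real.exp_log (Real.cosh_pos _)]
  rw [hk, Real.exp_le_exp, Real.exp_le_exp]
  have h1 := lc_lower (u / Real.sqrt (Real.sqrt n))
  have h2 := lc_upper (u / Real.sqrt (Real.sqrt n))
  generalize Real.log (Real.cosh (u / Real.sqrt (Real.sqrt n))) = L at *
  have e2 : (u / Real.sqrt (Real.sqrt n)) ^ 2 = u ^ 2 / Real.sqrt n := by rw [div_pow, hq2]
  have e4 : (u / Real.sqrt (Real.sqrt n)) ^ 4 = u ^ 4 / n := by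
    rw [show ∀ x : ℝ, x ^ 4 = (x ^ 2) ^ 2 by intro x; ring, e2, div_pow, hr2]; ring
  rw [e2, e4] at h1 h2
  generalize Real.sqrt n = r at *
  have hE : -r * u ^ 2 / (2 * (1 + h / r)) = h * r / (2 * (r + h)) * u ^ 2 - r * u ^ 2 / 2 := by
    have : 1 + h / r = (r + h) / r := by field_simp
    rw [this]
    field_simp
    ring
  rw [hE]
  have h1' := mul_le_mul_of_nonneg_left h1 hn'.le
  have h2' := mul_le_mul_of_nonneg_left h2 hn'.le
  have f1 : (n : ℝ) * (u ^ 2 / r / 2 - u ^ 4 / n / 12) = r * u ^ 2 / 2 - u ^ 4 / 12 := by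
    rw [← hr2]; field_simp
  have f2 : (n : ℝ) * (u ^ 2 / r / 2 - u ^ 4 / n / (12 * (1 + u ^ 2 / r)))
      = r * u ^ 2 / 2 - u ^ 4 / (12 * (1 + u ^ 2 / r)) := by
    have : 0 < 1 + u ^ 2 / r := by positivity
    rw [← hr2]; field_simp
  rw [f1] at h1'
  rw [f2] at h2'
  constructor <;> linarith

lemma sqrt_nat_atTop : Tendsto (fun n : ℕ => Real.sqrt (n : ℝ)) atTop atTop :=
  Real.tendsto_sqrt_atTop.comp tendsto_natCast_atTop_atTop

lemma kern_tendsto (h u : ℝ) : Tendsto (fun n : ℕ => kern n (1 + h / Real.sqrt n) u) atTop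
    (nhds (Real.exp (-(u ^ 4) / 12 + h * u ^ 2 / 2))) := by
  have hc : Tendsto (fun r : ℝ => h * r / (2 * (r + h)) * u ^ 2) atTop (nhds (h * u ^ 2 / 2)) := by
    have h1 : Tendsto (fun r : ℝ => h / (2 * (1 + h / r)) * u ^ 2) atTop
        (nhds (h / (2 * (1 + 0)) * u ^ 2)) := by
      have : Tendsto (fun r : ℝ => h / r) atTop (nhds 0) := tendsto_const_nhds.div_atTop tendsto_id
      refine Tendsto.mul_const _ (Tendsto.div tendsto_const_nhds ?_ (by norm_num))
      exact (this.const_add 1).const_mul 2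
    have h2 : h / (2 * (1 + 0)) * u ^ 2 = h * u ^ 2 / 2 := by ring
    rw [h2] at h1
    refine h1.congr' ?_
    filter_upwards [eventually_gt_atTop 0, eventually_gt_atTop (-h)] with r hr hr2
    have : 0 < r + h := by linarith
    have e : 1 + h / r = (r + h) / r := by field_simp
    rw [e]; field_simp
  have hd : Tendsto (fun r : ℝ => u ^ 4 / (12 * (1 + u ^ 2 / r))) atTop (nhds (u ^ 4 / 12)) := by
    have : Tendsto (fun r : ℝ => u ^ 2 / r) atTop (nhds 0) := tendsto_const_nhds.div_atTop tendsto_id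
    have := (tendsto_const_nhds (x := u ^ 4)).div ((this.const_add 1).const_mul 12) (by norm_num)
    have e : u ^ 4 / (12 * (1 + 0)) = u ^ 4 / 12 := by norm_num
    rw [e] at this
    exact this
  have hlo := (Real.continuous_exp.tendsto _).comp ((hc.sub_const (u ^ 4 / 12)).comp sqrt_nat_atTop)
  have hhi := (Real.continuous_exp.tendsto _).comp ((hc.sub hd).comp sqrt_nat_atTop)
  have e : h * u ^ 2 / 2 - u ^ 4 / 12 = -(u ^ 4) / 12 + h * u ^ 2 / 2 := by ring
  rw [e] at hlo hhi
  have hev : ∀ᶠ n : ℕ in atTop, 0 < n ∧ 0 < Real.sqrt n + h := by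
    filter_upwards [eventually_gt_atTop 0, sqrt_nat_atTop.eventually_gt_atTop (-h)] with n h1 h2
    exact ⟨h1, by linarith⟩
  refine tendsto_of_tendsto_of_tendsto_of_le_of_le' hlo hhi ?_ ?_
  · filter_upwards [hev] with n hn
    exact (kern_bounds n hn.1 h u hn.2).1
  · filter_upwards [hev] with n hn
    exact (kern_bounds n hn.1 h u hn.2).2

lemma kern_nonneg (n : ℕ) (θ u : ℝ) : 0 ≤ kern n θ u := by
  have := Real.cosh_pos (u / Real.sqrt (Real.sqrt n))
  unfold kern; positivity

lemma kern_dom (h : ℝ) : ∃ C : ℝ, ∀ᶠ n : ℕ in atTop, ∀ u,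
    kern n (1 + h / Real.sqrt n) u ≤ C * Real.exp (-1 * u ^ 2) := by
  set R := 12 * (|h| + 1) with hR
  refine ⟨Real.exp (R ^ 2 / 12), ?_⟩
  filter_upwards [eventually_gt_atTop 0, sqrt_nat_atTop.eventually_ge_atTop R] with n hn hr u
  have ha := abs_nonneg h
  have hRpos : 0 < R := by positivity
  have hah := neg_abs_le h
  have hrh : 0 < Real.sqrt n + h := by nlinarith
  refine (kern_bounds n hn h u hrh).2.trans ?_
  rw [← Real.exp_add, Real.exp_le_exp]
  generalize Real.sqrt n = r at *
  have hr0 : 0 < r := by linarith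
  have h1 : h * r / (2 * (r + h)) ≤ |h| := by
    rw [div_le_iff₀ (by positivity)]
    have : h * r ≤ |h| * r := by gcongr; exact le_abs_self h
    nlinarith
  have h2 : (R * u ^ 2 - R ^ 2) / 12 ≤ u ^ 4 / (12 * (1 + u ^ 2 / r)) := by
    have : u ^ 4 / (12 * (1 + u ^ 2 / R)) ≤ u ^ 4 / (12 * (1 + u ^ 2 / r)) := by gcongr
    refine le_trans ?_ this
    have e : 1 + u ^ 2 / R = (R + u ^ 2) / R := by field_simp
    rw [e, div_le_div_iff₀ (by positivity) (by positivity)]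
    have : (R * u ^ 2 - R ^ 2) * (12 * ((R + u ^ 2) / R)) = 12 * (u ^ 4 - R ^ 2) := by
      field_simp; ring
    rw [this]; nlinarith [sq_nonneg R]
  have h3 : h * r / (2 * (r + h)) * u ^ 2 ≤ |h| * u ^ 2 := by gcongr
  have h4 : R * u ^ 2 = 12 * (|h| + 1) * u ^ 2 := by rw [hR]
  nlinarith

lemma kern_cont (n : ℕ) (θ : ℝ) : Continuous (kern n θ) := by
  unfold kern
  have := Real.continuous_cosh
  fun_prop

lemma int_tendsto (h : ℝ) (g : ℝ → ℝ) (hg : Continuous g) (B : ℝ) (hB : ∀ u, |g u| ≤ B) :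
    Tendsto (fun n : ℕ => ∫ u, g u * kern n (1 + h / Real.sqrt n) u) atTop
      (nhds (∫ u, g u * Real.exp (-(u ^ 4) / 12 + h * u ^ 2 / 2))) := by
  obtain ⟨C, hC⟩ := kern_dom h
  refine tendsto_integral_filter_of_dominated_convergence
    (fun u => B * (C * Real.exp (-1 * u ^ 2))) ?_ ?_ ?_ ?_
  · exact Eventually.of_forall fun n => (hg.mul (kern_cont n _)).aestronglyMeasurable
  · filter_upwards [hC] with n hn
    refine Eventually.of_forall fun u => ?_
    rw [norm_mul, Real.norm_eq_abs, Real.norm_eq_abs, abs_of_nonneg (kern_nonneg _ _ _)]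
    exact mul_le_mul (hB u) (hn u) (kern_nonneg _ _ _) ((abs_nonneg _).trans (hB u))
  · exact ((integrable_exp_neg_mul_sq one_pos).const_mul C).const_mul B
  · exact Eventually.of_forall fun u => (kern_tendsto h u).const_mul _

lemma lim_integrable (h : ℝ) :
    Integrable (fun u : ℝ => Real.exp (-(u ^ 4) / 12 + h * u ^ 2 / 2)) := by
  obtain ⟨C, hC⟩ := kern_dom h
  refine ((integrable_exp_neg_mul_sq one_pos).const_mul C).mono'
    (by fun_prop) (Eventually.of_forall fun u => ?_)
  rw [Real.norm_eq_abs, Real.abs_exp]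
  exact le_of_tendsto (kern_tendsto h u) (hC.mono fun n hn => hn u)

lemma lim_pos (h : ℝ) : 0 < ∫ u : ℝ, Real.exp (-(u ^ 4) / 12 + h * u ^ 2 / 2) :=
  integral_exp_pos (lim_integrable h)

noncomputable def wt (n : ℕ) (θ : ℝ) (x : Fin n → Bool) : ℝ :=
  Real.exp ((n : ℝ) * θ * mag n x ^ 2 / 2)

noncomputable def Wn (n : ℕ) (x : Fin n → Bool) : ℝ := Real.sqrt (Real.sqrt n) * mag n x

lemma cosh_sum (n : ℕ) (a : ℝ) :
    ∑ x : Fin n → Bool, Real.exp (a * ∑ i, spin (x i)) = (2 * Real.cosh a) ^ n := by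
  have h1 : ∀ x : Fin n → Bool, Real.exp (a * ∑ i, spin (x i)) =
      ∏ i, Real.exp (a * spin (x i)) := by
    intro x; rw [Finset.mul_sum, Real.exp_sum]
  simp_rw [h1]
  rw [← Fintype.prod_sum (fun (_ : Fin n) (b : Bool) => Real.exp (a * spin b))]
  simp [spin, Real.cosh_eq]
  congr 1
  ring

lemma hs_alg (n : ℕ) (hn : 0 < n) (θ : ℝ) (hθ : 0 < θ) (x : Fin n → Bool) (u : ℝ) :
    Real.exp (-(Real.sqrt n) * u ^ 2 / (2 * θ)) *
      Real.exp (u / Real.sqrt (Real.sqrt n) * ∑ i, spin (x i)) =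
    wt n θ x * Real.exp (-(Real.sqrt n / (2 * θ)) * (u - θ * Wn n x) ^ 2) := by
  have hn' : (0 : ℝ) < n := by exact_mod_cast hn
  have hr0 : 0 < Real.sqrt n := Real.sqrt_pos.2 hn'
  have hq0 : 0 < Real.sqrt (Real.sqrt n) := Real.sqrt_pos.2 hr0
  have hq2 : Real.sqrt (Real.sqrt n) ^ 2 = Real.sqrt n := Real.sq_sqrt hr0.le
  have hr2 : Real.sqrt n ^ 2 = n := Real.sq_sqrt hn'.le
  have hS : ∑ i, spin (x i) = n * mag n x := by unfold mag; field_simp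
  rw [hS, wt, Wn, ← Real.exp_add, ← Real.exp_add]
  congr 1
  generalize mag n x = m
  generalize Real.sqrt (Real.sqrt n) = q at *
  generalize Real.sqrt n = r at *
  rw [← hr2, ← hq2]
  field_simp
  ring

lemma gauss_integrable (b c : ℝ) (hb : 0 < b) :
    Integrable (fun u : ℝ => Real.exp (-b * (u - c) ^ 2)) :=
  (integrable_exp_neg_mul_sq hb).comp_sub_right c

lemma bdd_gauss_integrable (b c : ℝ) (hb : 0 < b) (g : ℝ → ℝ) (hg : Continuous g) (B : ℝ)
    (hB : ∀ u, |g u| ≤ B) : Integrable (fun u : ℝ => g u * Real.exp (-b * (u - c) ^ 2)) :=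
  (gauss_integrable b c hb).bdd_mul hg.aestronglyMeasurable
    (Eventually.of_forall fun u => by simpa using hB u)

lemma gauss_int (b c : ℝ) : ∫ u : ℝ, Real.exp (-b * (u - c) ^ 2) = Real.sqrt (Real.pi / b) := by
  rw [← integral_gaussian b]
  exact integral_sub_right_eq_self (fun u => Real.exp (-b * u ^ 2)) c

lemma hs_main (n : ℕ) (hn : 0 < n) (θ : ℝ) (hθ : 0 < θ) (g : ℝ → ℝ) (hg : Continuous g) (B : ℝ)
    (hB : ∀ u, |g u| ≤ B) :
    2 ^ n * ∫ u, g u * kern n θ u = ∑ x : Fin n → Bool, wt n θ x *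
      ∫ u, g u * Real.exp (-(Real.sqrt n / (2 * θ)) * (u - θ * Wn n x) ^ 2) := by
  have hr0 : 0 < Real.sqrt n := Real.sqrt_pos.2 (by exact_mod_cast hn)
  have hb : 0 < Real.sqrt n / (2 * θ) := by positivity
  simp_rw [← integral_const_mul]
  rw [← integral_finsetSum]
  · congr 1
    funext u
    have : ∀ x : Fin n → Bool,
        wt n θ x * (g u * Real.exp (-(Real.sqrt n / (2 * θ)) * (u - θ * Wn n x) ^ 2)) =
        g u * Real.exp (-(Real.sqrt n) * u ^ 2 / (2 * θ)) *
          Real.exp (u / Real.sqrt (Real.sqrt n) * ∑ i, spin (x i)) := by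
      intro x
      rw [mul_assoc (g u), hs_alg n hn θ hθ x u]; ring
    simp_rw [this]
    rw [← Finset.mul_sum, cosh_sum, kern, mul_pow]
    ring
  · intro x _
    exact (bdd_gauss_integrable _ _ hb g hg B hB).const_mul _

lemma sum_wt_pos (n : ℕ) (θ : ℝ) : 0 < ∑ x : Fin n → Bool, wt n θ x :=
  Finset.sum_pos (fun _ _ => Real.exp_pos _) Finset.univ_nonempty

lemma hs_one (n : ℕ) (hn : 0 < n) (θ : ℝ) (hθ : 0 < θ) :
    2 ^ n * ∫ u, 1 * kern n θ u =
      (∑ x : Fin n → Bool, wt n θ x) * Real.sqrt (Real.pi / (Real.sqrt n / (2 * θ))) := by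
  rw [hs_main n hn θ hθ (fun _ => 1) continuous_const 1 (by simp), Finset.sum_mul]
  simp_rw [one_mul, gauss_int]

lemma Z_eq (n : ℕ) (hn : 0 < n) (θ : ℝ) (hθ : 0 < θ) :
    Zcw n θ = n * Real.log 2 + Real.log (∫ u, 1 * kern n θ u)
      - Real.log (Real.sqrt (2 * Real.pi / Real.sqrt n)) - Real.log (Real.sqrt θ) := by
  have hr0 : 0 < Real.sqrt n := Real.sqrt_pos.2 (by exact_mod_cast hn)
  have h1 := hs_one n hn θ hθ
  have h2 := sum_wt_pos n θ
  have hpi := Real.pi_pos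
  have e : Real.sqrt (Real.pi / (Real.sqrt n / (2 * θ))) =
      Real.sqrt (2 * Real.pi / Real.sqrt n) * Real.sqrt θ := by
    rw [← Real.sqrt_mul (by positivity)]; congr 1; field_simp
  rw [e] at h1
  have p1 : 0 < Real.sqrt (2 * Real.pi / Real.sqrt n) := Real.sqrt_pos.2 (by positivity)
  have p2 : 0 < Real.sqrt θ := Real.sqrt_pos.2 hθ
  have p3 : 0 < ∫ u, 1 * kern n θ u := by
    have : 0 < (2 : ℝ) ^ n * ∫ u, 1 * kern n θ u := by rw [h1]; positivity
    exact pos_of_mul_pos_right this (by positivity)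
  have h3 := congrArg Real.log h1
  rw [Real.log_mul (by positivity) p3.ne', Real.log_mul h2.ne' (by positivity),
    Real.log_mul p1.ne' p2.ne', Real.log_pow] at h3
  have : Zcw n θ = Real.log (∑ x : Fin n → Bool, wt n θ x) := rfl
  rw [this]
  linarith

lemma Zdiff_tendsto (h : ℝ) : Tendsto (fun n : ℕ => Zcw n (1 + h / Real.sqrt n) - Zcw n 1) atTop
    (nhds (Fcrit h - Fcrit 0)) := by
  have hT : ∀ h : ℝ, Tendsto (fun n : ℕ => Real.log (∫ u, 1 * kern n (1 + h / Real.sqrt n) u))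
      atTop (nhds (Fcrit h)) := by
    intro h
    have := int_tendsto h (fun _ => 1) continuous_const 1 (by simp)
    simp only [one_mul] at this ⊢
    exact this.log (lim_pos h).ne'
  have h0 : Tendsto (fun n : ℕ => 1 + h / Real.sqrt n) atTop (nhds 1) := by
    have : Tendsto (fun n : ℕ => h / Real.sqrt n) atTop (nhds 0) :=
      tendsto_const_nhds.div_atTop sqrt_nat_atTop
    simpa using this.const_add 1
  have hs : Tendsto (fun n : ℕ => Real.log (Real.sqrt (1 + h / Real.sqrt n))) atTop (nhds 0) := by
    have := ((Real.continuous_sqrt.tendsto _).comp h0).log (by simp)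
    simpa using this
  have := ((hT h).sub (hT 0)).sub hs
  rw [sub_zero] at this
  refine this.congr' ?_
  filter_upwards [eventually_gt_atTop 0, h0.eventually_const_lt (show (0 : ℝ) < 1 by norm_num)]
    with n hn hpos
  rw [Z_eq n hn _ hpos, Z_eq n hn 1 one_pos]
  simp
  ring

lemma cw_integral (n : ℕ) (θ : ℝ) (f : (Fin n → Bool) → ℝ) :
    ∫ x, f x ∂ cwMeasure n θ = (∑ x, wt n θ x * f x) / ∑ x : Fin n → Bool, wt n θ x := by
  have hu : cwUnnorm n θ Set.univ = ENNReal.ofReal (∑ x : Fin n → Bool, wt n θ x) := by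
    rw [ENNReal.ofReal_sum_of_nonneg (f := wt n θ) (fun x _ => (Real.exp_pos _).le)]
    simp [cwUnnorm, wt]
  rw [cwMeasure, integral_smul_measure, hu, ENNReal.toReal_inv,
    ENNReal.toReal_ofReal (sum_wt_pos n θ).le, cwUnnorm, integral_finsetSum_measure]
  · simp_rw [integral_smul_measure, integral_dirac]
    rw [div_eq_inv_mul, smul_eq_mul]
    congr 1
    refine Finset.sum_congr rfl fun x _ => ?_
    rw [ENNReal.toReal_ofReal (Real.exp_pos _).le, smul_eq_mul, wt]
  · intro x _
    exact Integrable.smul_measure (by simp) (by simp)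

instance cw_prob (n : ℕ) (θ : ℝ) : IsProbabilityMeasure (cwMeasure n θ) := by
  have hu : cwUnnorm n θ Set.univ = ENNReal.ofReal (∑ x : Fin n → Bool, wt n θ x) := by
    rw [ENNReal.ofReal_sum_of_nonneg (f := wt n θ) (fun x _ => (Real.exp_pos _).le)]
    simp [cwUnnorm, wt]
  constructor
  rw [cwMeasure, Measure.smul_apply, smul_eq_mul, hu]
  exact ENNReal.inv_mul_cancel (by simpa using sum_wt_pos n θ) (by simp)

lemma H_integral (h : ℝ) (f : ℝ → ℝ) :
    ∫ u, f u ∂ Hmeasure h = (∫ u, f u * Real.exp (-(u ^ 4) / 12 + h * u ^ 2 / 2)) /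
      ∫ u : ℝ, Real.exp (-(u ^ 4) / 12 + h * u ^ 2 / 2) := by
  rw [Hmeasure, integral_withDensity_eq_integral_toReal_smul (by fun_prop) (by simp),
    ← integral_div]
  congr 1
  funext u
  rw [ENNReal.toReal_ofReal (Real.exp_pos _).le, Real.exp_sub, Fcrit, Real.exp_log (lim_pos h),
    smul_eq_mul]
  ring

instance H_prob (h : ℝ) : IsProbabilityMeasure (Hmeasure h) := by
  constructor
  rw [Hmeasure, withDensity_apply _ MeasurableSet.univ, Measure.restrict_univ,
    ← ofReal_integral_eq_lintegral_ofReal]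
  · simp_rw [Real.exp_sub]
    rw [integral_div, Fcrit, Real.exp_log (lim_pos h), div_self (lim_pos h).ne']
    simp
  · simp_rw [Real.exp_sub]
    exact (lim_integrable h).div_const _
  · exact Eventually.of_forall fun u => (Real.exp_pos _).le

lemma abs_gauss (n : ℕ) (hn : 0 < n) :
    ∫ v : ℝ, |v| * Real.exp (-(Real.sqrt n / (2 * 1)) * v ^ 2) =
      (∫ v : ℝ, |v| * Real.exp (-(1 / 2) * v ^ 2)) / Real.sqrt n := by
  have hr0 : 0 < Real.sqrt n := Real.sqrt_pos.2 (by exact_mod_cast hn)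
  have hq0 : 0 < Real.sqrt (Real.sqrt n) := Real.sqrt_pos.2 hr0
  have hq2 : Real.sqrt (Real.sqrt n) ^ 2 = Real.sqrt n := Real.sq_sqrt hr0.le
  have := Measure.integral_comp_mul_left (fun v : ℝ => |v| * Real.exp (-(1 / 2) * v ^ 2))
    (Real.sqrt (Real.sqrt n))
  generalize Real.sqrt (Real.sqrt n) = q at *
  rw [← hq2]
  rw [abs_of_pos (by positivity), smul_eq_mul] at this
  have e : ∀ v : ℝ, |q * v| * Real.exp (-(1 / 2) * (q * v) ^ 2) =
      q * (|v| * Real.exp (-(q ^ 2 / (2 * 1)) * v ^ 2)) := by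
    intro v
    rw [abs_mul, abs_of_pos hq0, mul_assoc]
    congr 3
    ring
  simp_rw [e] at this
  rw [integral_const_mul] at this
  rw [eq_div_iff (by positivity)]
  field_simp at this ⊢
  linarith

lemma abs_gauss_integrable (b : ℝ) (hb : 0 < b) :
    Integrable (fun v : ℝ => |v| * Real.exp (-b * v ^ 2)) := by
  have := (integrable_mul_exp_neg_mul_sq hb).abs
  simpa [abs_mul] using this

lemma smooth_bound (n : ℕ) (hn : 0 < n) (c : ℝ) (g : ℝ → ℝ) (hg : Continuous g) (B : ℝ)
    (hB : ∀ u, |g u| ≤ B) (L : NNReal) (hL : LipschitzWith L g) :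
    |(∫ u, g u * Real.exp (-(Real.sqrt n / (2 * 1)) * (u - c) ^ 2)) -
      g c * Real.sqrt (Real.pi / (Real.sqrt n / (2 * 1)))| ≤
      L * ((∫ v : ℝ, |v| * Real.exp (-(1 / 2) * v ^ 2)) / Real.sqrt n) := by
  have hr0 : 0 < Real.sqrt n := Real.sqrt_pos.2 (by exact_mod_cast hn)
  have hb : 0 < Real.sqrt n / (2 * 1) := by positivity
  rw [← abs_gauss n hn]
  generalize Real.sqrt n / (2 * 1) = b at *
  rw [← gauss_int b c, ← integral_const_mul, ← integral_sub
    (bdd_gauss_integrable b c hb g hg B hB) ((gauss_integrable b c hb).const_mul _),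
    ← integral_const_mul,
    ← integral_sub_right_eq_self (fun v => (L : ℝ) * (|v| * Real.exp (-b * v ^ 2))) c]
  rw [← Real.norm_eq_abs]
  refine norm_integral_le_of_norm_le
    (((abs_gauss_integrable b hb).const_mul (L : ℝ)).comp_sub_right c)
    (Eventually.of_forall fun u => ?_)
  rw [← sub_mul, norm_mul, Real.norm_eq_abs, Real.norm_eq_abs, Real.abs_exp, ← mul_assoc]
  gcongr
  have := hL.dist_le_mul u c
  rwa [Real.dist_eq, Real.dist_eq] at this

lemma lip_conv (g : ℝ → ℝ) (B : ℝ) (hB : ∀ u, |g u| ≤ B) (L : NNReal) (hL : LipschitzWith L g) :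
    Tendsto (fun n : ℕ => ∫ x, g (Wn n x) ∂ cwMeasure n 1) atTop (nhds (∫ u, g u ∂ Hmeasure 0)) := by
  have hg := hL.continuous
  set K := ∫ v : ℝ, |v| * Real.exp (-(1 / 2) * v ^ 2) with hK
  have t1 : Tendsto (fun n : ℕ => (∫ u, g u * kern n 1 u) / ∫ u, 1 * kern n 1 u) atTop
      (nhds (∫ u, g u ∂ Hmeasure 0)) := by
    rw [H_integral]
    have h1 := int_tendsto 0 g hg B hB
    have h2 := int_tendsto 0 (fun _ => 1) continuous_const 1 (by simp)
    have h3 := h1.div h2 (by simpa using (lim_pos 0).ne')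
    simp only [zero_div, add_zero, zero_mul, one_mul] at h3 ⊢
    exact h3
  have t2 : Tendsto (fun n : ℕ => (L : ℝ) * K / Real.sqrt (2 * Real.pi * Real.sqrt n)) atTop
      (nhds 0) := by
    refine tendsto_const_nhds.div_atTop (Real.tendsto_sqrt_atTop.comp ?_)
    exact sqrt_nat_atTop.const_mul_atTop (by have := Real.pi_pos; positivity)
  refine tendsto_of_tendsto_of_dist t1 (squeeze_zero' (Eventually.of_forall fun n => dist_nonneg)
    ?_ t2)
  filter_upwards [eventually_gt_atTop 0] with n hn
  have hr0 : 0 < Real.sqrt n := Real.sqrt_pos.2 (by exact_mod_cast hn)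
  have hpi := Real.pi_pos
  rw [cw_integral, Real.dist_eq, ← mul_div_mul_left _ _ (show (2 : ℝ) ^ n ≠ 0 by positivity),
    hs_one n hn 1 one_pos, hs_main n hn 1 one_pos g hg B hB]
  set s := Real.sqrt (Real.pi / (Real.sqrt n / (2 * 1))) with hs
  have hs0 : 0 < s := Real.sqrt_pos.2 (by positivity)
  have hw := sum_wt_pos n 1
  set w := ∑ x : Fin n → Bool, wt n 1 x with hwdef
  have hrs : Real.sqrt (2 * Real.pi * Real.sqrt n) = Real.sqrt n * s := by
    rw [hs, show 2 * Real.pi * Real.sqrt n = Real.sqrt n ^ 2 * (Real.pi / (Real.sqrt n / (2 * 1)))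
      by field_simp, Real.sqrt_mul (by positivity), Real.sqrt_sq hr0.le]
  rw [hrs]
  simp only [one_mul]
  rw [← mul_div_mul_right (∑ x, wt n 1 x * g (Wn n x)) w hs0.ne', ← sub_div, Finset.sum_mul,
    ← Finset.sum_sub_distrib, abs_div, abs_of_pos (show 0 < w * s by positivity)]
  rw [div_le_div_iff₀ (by positivity) (by positivity)]
  have hsum : |∑ x : Fin n → Bool, (wt n 1 x * (∫ u, g u *
      Real.exp (-(Real.sqrt n / (2 * 1)) * (u - Wn n x) ^ 2)) - wt n 1 x * g (Wn n x) * s)| ≤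
      w * (L * (K / Real.sqrt n)) := by
    refine (Finset.abs_sum_le_sum_abs _ _).trans ?_
    rw [hwdef, Finset.sum_mul]
    refine Finset.sum_le_sum fun x _ => ?_
    rw [mul_assoc, ← mul_sub, abs_mul, abs_of_pos (show 0 < wt n 1 x from Real.exp_pos _)]
    exact mul_le_mul_of_nonneg_left (smooth_bound n hn (Wn n x) g hg B hB L hL) (Real.exp_pos _).le
  calc _ ≤ w * (L * (K / Real.sqrt n)) * (Real.sqrt n * s) := by gcongr
    _ = _ := by field_simp

lemma lip_to_bc (X : (n : ℕ) → (Fin n → Bool) → ℝ) (ν : Measure ℝ) [IsProbabilityMeasure ν]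
    (hX : ∀ (g : ℝ → ℝ) (B : ℝ), (∀ u, |g u| ≤ B) → ∀ L : NNReal, LipschitzWith L g →
      Tendsto (fun n : ℕ => ∫ x, g (X n x) ∂ cwMeasure n 1) atTop (nhds (∫ u, g u ∂ ν)))
    (f : BoundedContinuousFunction ℝ ℝ) :
    Tendsto (fun n : ℕ => ∫ x, f (X n x) ∂ cwMeasure n 1) atTop (nhds (∫ u, f u ∂ ν)) := by
  have hm : ∀ n, Measurable (X n) := fun n => measurable_of_finite _
  let μ : ℕ → ProbabilityMeasure ℝ := fun n =>
    ⟨(cwMeasure n 1).map (X n), Measure.isProbabilityMeasure_map (hm n).aemeasurable⟩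
  let ν' : ProbabilityMeasure ℝ := ⟨ν, inferInstance⟩
  have hint : ∀ n, ∀ g : ℝ → ℝ, Continuous g →
      ∫ u, g u ∂ (μ n : Measure ℝ) = ∫ x, g (X n x) ∂ cwMeasure n 1 := fun n g hg =>
    integral_map (hm n).aemeasurable hg.aestronglyMeasurable
  have : Tendsto μ atTop (nhds ν') := by
    rw [tendsto_iff_forall_lipschitz_integral_tendsto]
    rintro g ⟨C, hC⟩ ⟨L, hL⟩
    simp_rw [hint _ g hL.continuous]
    refine hX g (C + |g 0|) (fun u => ?_) L hL
    have := hC u 0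
    rw [Real.dist_eq] at this
    have h2 := abs_add_le (g u - g 0) (g 0)
    rw [sub_add_cancel] at h2
    linarith
  have := ProbabilityMeasure.tendsto_iff_forall_integral_tendsto.1 this f
  simp_rw [hint _ f f.continuous] at this
  exact this

theorem stmt18 (h : ℝ) :
    ∀ f : BoundedContinuousFunction ℝ ℝ,
      Tendsto (fun n : ℕ =>
          ∫ x, f (h / (2 * Real.sqrt (n : ℝ)) * ((n : ℝ) * mag n x ^ 2) -
              (Zcw n (1 + h / Real.sqrt (n : ℝ)) - Zcw n 1)) ∂ cwMeasure n 1)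
        atTop
        (nhds (∫ u, f (h / 2 * u ^ 2 - Fcrit h + Fcrit 0) ∂ Hmeasure 0)) := by
  intro f
  have hc := Zdiff_tendsto h
  set φ : ℝ → ℝ := fun u => h / 2 * u ^ 2 - Fcrit h + Fcrit 0 with hφ
  have hφc : Continuous φ := by fun_prop
  have hW : ∀ (n : ℕ) (x : Fin n → Bool), h / (2 * Real.sqrt (n : ℝ)) * ((n : ℝ) * mag n x ^ 2) =
      h / 2 * Wn n x ^ 2 := by
    intro n x
    rcases Nat.eq_zero_or_pos n with rfl | hn
    · simp [Wn]
    · have hn' : (0 : ℝ) < n := by exact_mod_cast hn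
      have hr0 : 0 < Real.sqrt n := Real.sqrt_pos.2 hn'
      have hr2 : Real.sqrt n ^ 2 = n := Real.sq_sqrt hn'.le
      rw [Wn, mul_pow, Real.sq_sqrt hr0.le]
      generalize Real.sqrt n = r at *
      rw [← hr2]
      field_simp
  haveI : IsProbabilityMeasure ((Hmeasure 0).map φ) :=
    Measure.isProbabilityMeasure_map hφc.aemeasurable
  have hgoal := lip_to_bc (fun n x => h / (2 * Real.sqrt (n : ℝ)) * ((n : ℝ) * mag n x ^ 2) -
      (Zcw n (1 + h / Real.sqrt (n : ℝ)) - Zcw n 1)) ((Hmeasure 0).map φ) ?_ f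
  · rwa [integral_map hφc.aemeasurable f.continuous.aestronglyMeasurable] at hgoal
  intro g B hB L hL
  rw [integral_map hφc.aemeasurable hL.continuous.aestronglyMeasurable]
  have hlim := lip_to_bc Wn (Hmeasure 0) lip_conv
    (BoundedContinuousFunction.ofNormedAddCommGroup (fun u => g (φ u)) (hL.continuous.comp hφc) B
      (fun u => hB _))
  simp only [BoundedContinuousFunction.coe_ofNormedAddCommGroup] at hlim
  have t2 : Tendsto (fun n : ℕ => (L : ℝ) * |(Zcw n (1 + h / Real.sqrt (n : ℝ)) - Zcw n 1) -
      (Fcrit h - Fcrit 0)|) atTop (nhds 0) := by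
    have := ((hc.sub_const (Fcrit h - Fcrit 0)).abs).const_mul (L : ℝ)
    simpa using this
  refine tendsto_of_tendsto_of_dist hlim (squeeze_zero (fun n => dist_nonneg) (fun n => ?_) t2)
  rw [Real.dist_eq, ← integral_sub Integrable.of_finite Integrable.of_finite, ← Real.norm_eq_abs]
  refine (norm_integral_le_of_norm_le_const (C := (L : ℝ) *
    |(Zcw n (1 + h / Real.sqrt (n : ℝ)) - Zcw n 1) - (Fcrit h - Fcrit 0)|)
    (Eventually.of_forall fun x => ?_)).trans (by simp)
  have := hL.dist_le_mul (φ (Wn n x)) (h / (2 * Real.sqrt (n : ℝ)) * ((n : ℝ) * mag n x ^ 2) -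
      (Zcw n (1 + h / Real.sqrt (n : ℝ)) - Zcw n 1))
  rw [Real.dist_eq, Real.dist_eq, hW] at this
  rw [Real.norm_eq_abs, hW]
  refine this.trans (le_of_eq ?_)
  congr 2
  simp only [hφ]
  ring
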